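/- Let M_∞, M_1 ⊂ R^d be disjoint, convex, compact sets, V symmetric positive-definite, and define the V-norm ‖θ‖_V = sqrt(θ^T V^{-2} θ). Let (μ̂_∞, μ̂_1) minimize ‖μ_∞ − μ_1‖_V over M_∞ × M_1. Then the pair of Gaussians (N(μ̂_∞,V), N(μ̂_1,V)) minimizes the Fisher divergence D_F(R_1‖R_∞) over all pairs (R_∞, R_1) in the convex hulls G_∞ × G_1 of {N(θ,V): θ ∈ M_∞} and {N(θ,V): θ ∈ M_1}, and the minimum value is ½‖μ̂_∞ − μ̂_1‖²_V. -/

import Mathlib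

open MeasureTheory Real
open scoped RealInnerProductSpace

/-- The score (gradient of the log-density) of a density `p` on `ℝ^d`. -/
noncomputable def score {d : ℕ} (p : EuclideanSpace ℝ (Fin d) → ℝ)
    (x : EuclideanSpace ℝ (Fin d)) : EuclideanSpace ℝ (Fin d) :=
  gradient (fun y => Real.log (p y)) x

/-- Fisher divergence `D_F(P‖Q) = E_{X∼P}[½‖∇log p(X) − ∇log q(X)‖²]` for densities `p, q`. -/
noncomputable def fisherDiv {d : ℕ} (p q : EuclideanSpace ℝ (Fin d) → ℝ) : ℝ :=
  ∫ x, (1 / 2) * ‖score p x - score q x‖ ^ 2 * p x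

/-- Density of the Gaussian `N(μ, V)` on `ℝ^d`, where `V` is the covariance operator. -/
noncomputable def gaussDensity {d : ℕ}
    (V : EuclideanSpace ℝ (Fin d) ≃L[ℝ] EuclideanSpace ℝ (Fin d))
    (μ x : EuclideanSpace ℝ (Fin d)) : ℝ :=
  (Real.sqrt ((2 * π) ^ d *
      LinearMap.det ((V : EuclideanSpace ℝ (Fin d) →L[ℝ] EuclideanSpace ℝ (Fin d)) :
        EuclideanSpace ℝ (Fin d) →ₗ[ℝ] EuclideanSpace ℝ (Fin d))))⁻¹ *
    Real.exp (-(1 / 2) * ⟪x - μ, V.symm (x - μ)⟫)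

/-- The `V`-norm `‖θ‖_V = sqrt (θᵀ V⁻² θ)`. -/
noncomputable def vnorm {d : ℕ}
    (V : EuclideanSpace ℝ (Fin d) ≃L[ℝ] EuclideanSpace ℝ (Fin d))
    (θ : EuclideanSpace ℝ (Fin d)) : ℝ :=
  Real.sqrt ⟪θ, V.symm (V.symm θ)⟫

/-- A positive-definite symmetric operator has a symmetric square root. -/
lemma exists_sqrt_op {d : ℕ}
    (A : EuclideanSpace ℝ (Fin d) →ₗ[ℝ] EuclideanSpace ℝ (Fin d))
    (hA : A.IsSymmetric) (hpos : ∀ x, 0 ≤ ⟪x, A x⟫) :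
    ∃ B : EuclideanSpace ℝ (Fin d) →ₗ[ℝ] EuclideanSpace ℝ (Fin d),
      A = B ∘ₗ B ∧ ∀ x, ⟪x, A x⟫ = ‖B x‖ ^ 2 := by
  have hn : Module.finrank ℝ (EuclideanSpace ℝ (Fin d)) = d := by simp
  let b := hA.eigenvectorBasis hn
  let l := hA.eigenvalues hn
  have hb : ∀ i, A (b i) = l i • b i := fun i => hA.apply_eigenvectorBasis hn i
  have hl : ∀ i, 0 ≤ l i := by
    intro i
    have := hpos (b i)
    rw [hb, inner_smul_right, real_inner_self_eq_norm_sq, b.orthonormal.1 i] at this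
    simpa using this
  let B := b.toBasis.constr ℝ (fun i => Real.sqrt (l i) • b i)
  have hB : ∀ i, B (b i) = Real.sqrt (l i) • b i := by
    intro i
    have := b.toBasis.constr_basis ℝ (fun i => Real.sqrt (l i) • b i) i
    simpa [B] using this
  have hAB : A = B ∘ₗ B := by
    apply b.toBasis.ext
    intro i
    simp only [OrthonormalBasis.coe_toBasis, LinearMap.comp_apply, hB, hb, map_smul, smul_smul]
    rw [Real.mul_self_sqrt (hl i)]
  have hBs : ∀ x y, ⟪B x, y⟫ = ⟪x, B y⟫ := by
    have hflip : (innerₗ (EuclideanSpace ℝ (Fin d))).comp B =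
        (innerₗ (EuclideanSpace ℝ (Fin d))).compl₂ B := by
      apply b.toBasis.ext
      intro i
      apply b.toBasis.ext
      intro j
      simp only [OrthonormalBasis.coe_toBasis, LinearMap.comp_apply, LinearMap.compl₂_apply,
        innerₗ_apply_apply, hB, inner_smul_left, inner_smul_right,
        b.inner_eq_ite]
      by_cases h : i = j
      · subst h; simp
      · simp [h]
    intro x y
    have := LinearMap.congr_fun (LinearMap.congr_fun hflip x) y
    simpa using this
  refine ⟨B, hAB, fun x => ?_⟩
  rw [← real_inner_self_eq_norm_sq, hBs]
  rw [hAB, LinearMap.comp_apply]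

lemma symm_symm {d : ℕ} (V : EuclideanSpace ℝ (Fin d) ≃L[ℝ] EuclideanSpace ℝ (Fin d))
    (hsymm : ∀ x y : EuclideanSpace ℝ (Fin d), ⟪V x, y⟫ = ⟪x, V y⟫)
    (x y : EuclideanSpace ℝ (Fin d)) : ⟪V.symm x, y⟫ = ⟪x, V.symm y⟫ := by
  have := hsymm (V.symm x) (V.symm y)
  simpa using this.symm

lemma gauss_facts {d : ℕ} (V : EuclideanSpace ℝ (Fin d) ≃L[ℝ] EuclideanSpace ℝ (Fin d))
    (hsymm : ∀ x y : EuclideanSpace ℝ (Fin d), ⟪V x, y⟫ = ⟪x, V y⟫)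
    (hposdef : ∀ x : EuclideanSpace ℝ (Fin d), x ≠ 0 → 0 < ⟪x, V x⟫)
    : (∀ μ x, 0 < gaussDensity V μ x) ∧
    ∀ μ, ∫ x, gaussDensity V μ x = 1 := by
  have hpos : ∀ x, 0 ≤ ⟪x, V.symm x⟫ := by
    intro x
    by_cases h : x = 0
    · simp [h]
    · have := hposdef (V.symm x) (by simpa using h)
      simp only [ContinuousLinearEquiv.apply_symm_apply] at this
      rw [real_inner_comm]; exact this.le
  obtain ⟨B, hAB, hB⟩ := exists_sqrt_op
    ((V.symm : EuclideanSpace ℝ (Fin d) →L[ℝ] EuclideanSpace ℝ (Fin d)) :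
        EuclideanSpace ℝ (Fin d) →ₗ[ℝ] EuclideanSpace ℝ (Fin d))
    (fun x y => symm_symm V hsymm x y) hpos
  set D := LinearMap.det ((V : EuclideanSpace ℝ (Fin d) →L[ℝ] EuclideanSpace ℝ (Fin d)) :
        EuclideanSpace ℝ (Fin d) →ₗ[ℝ] EuclideanSpace ℝ (Fin d)) with hD
  have hdet : D * (LinearMap.det B) ^ 2 = 1 := by
    rw [pow_two, ← LinearMap.det_comp, ← hAB, hD, ← LinearMap.det_comp]
    convert LinearMap.det_id
    ext1 x
    simp
  have hdB : LinearMap.det B ≠ 0 := by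
    intro h; rw [h] at hdet; norm_num at hdet
  have hDeq : D = (|LinearMap.det B| ^ 2)⁻¹ := by
    rw [sq_abs]; exact eq_inv_of_mul_eq_one_left hdet
  have habs : 0 < |LinearMap.det B| := abs_pos.mpr hdB
  have hDpos : 0 < D := by rw [hDeq]; positivity
  have hsq : Real.sqrt ((2 * π) ^ d * D) = Real.sqrt ((2 * π) ^ d) * |LinearMap.det B|⁻¹ := by
    rw [Real.sqrt_mul (by positivity), hDeq, ← inv_pow, Real.sqrt_sq (by positivity)]
  have hspos : 0 < Real.sqrt ((2 * π) ^ d * D) := Real.sqrt_pos.mpr (by positivity)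
  refine ⟨fun μ x => ?_, fun μ => ?_⟩
  · unfold gaussDensity
    rw [← hD]
    positivity
  · unfold gaussDensity
    rw [← hD, integral_const_mul]
    rw [integral_sub_right_eq_self (fun x : EuclideanSpace ℝ (Fin d) =>
      Real.exp (-(1 / 2) * ⟪x, V.symm x⟫)) μ]
    have h1 : ∀ x, ⟪x, V.symm x⟫ = ‖B x‖ ^ 2 := hB
    simp_rw [h1]
    have hBc : Continuous B := B.continuous_of_finiteDimensional
    have h2 : ∫ x, Real.exp (-(1 / 2) * ‖B x‖ ^ 2) =
        |LinearMap.det B|⁻¹ * Real.sqrt ((2 * π) ^ d) := by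
      have h3 := integral_map (μ := (volume : Measure (EuclideanSpace ℝ (Fin d))))
        (φ := B) hBc.measurable.aemeasurable
        (f := fun y => Real.exp (-(1 / 2) * ‖y‖ ^ 2))
        (by exact Continuous.aestronglyMeasurable (by fun_prop))
      rw [← h3, Measure.map_linearMap_addHaar_eq_smul_addHaar _ hdB, integral_smul_measure,
        GaussianFourier.integral_rexp_neg_mul_sq_norm (by norm_num), smul_eq_mul,
        ENNReal.toReal_ofReal (abs_nonneg _), abs_inv, finrank_euclideanSpace_fin,
        Real.sqrt_eq_rpow, ← Real.rpow_natCast, ← Real.rpow_mul (by positivity)]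
      congr 2
      · ring
      · ring
    rw [h2, hsq, mul_comm |LinearMap.det B|⁻¹, ← hsq]
    exact inv_mul_cancel₀ hspos.ne'

/-- The structural property shared by all mixtures over `M`. -/
def Good {d : ℕ} (V : EuclideanSpace ℝ (Fin d) ≃L[ℝ] EuclideanSpace ℝ (Fin d))
    (M : Set (EuclideanSpace ℝ (Fin d))) (p : EuclideanSpace ℝ (Fin d) → ℝ) : Prop :=
  (∀ x, 0 < p x) ∧ Integrable p ∧ ∫ x, p x = 1 ∧
    ∀ x, ∃ m ∈ M, HasGradientAt p (p x • V.symm (m - x)) x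

lemma good_gauss {d : ℕ} (V : EuclideanSpace ℝ (Fin d) ≃L[ℝ] EuclideanSpace ℝ (Fin d))
    (hsymm : ∀ x y : EuclideanSpace ℝ (Fin d), ⟪V x, y⟫ = ⟪x, V y⟫)
    (hposdef : ∀ x : EuclideanSpace ℝ (Fin d), x ≠ 0 → 0 < ⟪x, V x⟫)
    {M : Set (EuclideanSpace ℝ (Fin d))} {θ : EuclideanSpace ℝ (Fin d)}
    (hθ : θ ∈ M) : Good V M (gaussDensity V θ) := by
  obtain ⟨h1, h2⟩ := gauss_facts V hsymm hposdef
  refine ⟨h1 θ, Integrable.of_integral_ne_zero (by rw [h2]; norm_num), h2 θ, fun x => ⟨θ, hθ, ?_⟩⟩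
  rw [hasGradientAt_iff_hasFDerivAt]
  have hs : HasFDerivAt (fun x : EuclideanSpace ℝ (Fin d) => x - θ)
      (ContinuousLinearMap.id ℝ _) x := (hasFDerivAt_id x).sub_const θ
  have hA : HasFDerivAt (fun x : EuclideanSpace ℝ (Fin d) => V.symm (x - θ))
      ((V.symm : EuclideanSpace ℝ (Fin d) →L[ℝ] EuclideanSpace ℝ (Fin d)).comp
        (ContinuousLinearMap.id ℝ _)) x :=
    (V.symm : EuclideanSpace ℝ (Fin d) →L[ℝ] EuclideanSpace ℝ (Fin d)).hasFDerivAt.comp x hs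
  have h3 := (((hs.inner ℝ hA).const_mul (-(1 / 2))).exp).const_mul
    ((Real.sqrt ((2 * π) ^ d *
      LinearMap.det ((V : EuclideanSpace ℝ (Fin d) →L[ℝ] EuclideanSpace ℝ (Fin d)) :
        EuclideanSpace ℝ (Fin d) →ₗ[ℝ] EuclideanSpace ℝ (Fin d))))⁻¹)
  refine h3.congr_fderiv ?_
  ext y
  have h4 : ⟪x - θ, V.symm y⟫ = ⟪V.symm (x - θ), y⟫ := (symm_symm V hsymm _ _).symm
  have h5 : ⟪y, V.symm (x - θ)⟫ = ⟪V.symm (x - θ), y⟫ := real_inner_comm _ _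
  have h6 : V.symm (θ - x) = - V.symm (x - θ) := by rw [← map_neg, neg_sub]
  simp only [ContinuousLinearMap.smul_apply, ContinuousLinearMap.comp_apply,
    ContinuousLinearMap.prod_apply, fderivInnerCLM_apply, ContinuousLinearMap.id_apply,
    ContinuousLinearEquiv.coe_coe, InnerProductSpace.toDual_apply_apply, inner_smul_left, h6,
    inner_neg_left, h4, h5, smul_eq_mul, gaussDensity, conj_trivial]
  ring

lemma good_convex {d : ℕ} (V : EuclideanSpace ℝ (Fin d) ≃L[ℝ] EuclideanSpace ℝ (Fin d))
    {M : Set (EuclideanSpace ℝ (Fin d))} (hM : Convex ℝ M) :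
    Convex ℝ {p | Good V M p} := by
  rw [convex_iff_forall_pos]
  rintro p ⟨hp0, hpi, hp1, hpg⟩ q ⟨hq0, hqi, hq1, hqg⟩ a b ha hb hab
  have hpos : ∀ x, 0 < a * p x + b * q x := fun x =>
    add_pos (mul_pos ha (hp0 x)) (mul_pos hb (hq0 x))
  have hfun : a • p + b • q = fun x => a * p x + b * q x := by
    ext x; simp
  rw [Set.mem_setOf_eq, hfun]
  refine ⟨hpos, (hpi.const_mul a).add (hqi.const_mul b), ?_, fun x => ?_⟩
  · rw [integral_add (hpi.const_mul a) (hqi.const_mul b), integral_const_mul, integral_const_mul,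
      hp1, hq1]
    simpa using hab
  · obtain ⟨m, hm, hmg⟩ := hpg x
    obtain ⟨n, hn, hng⟩ := hqg x
    set s := a * p x + b * q x with hs
    have hs0 : 0 < s := hpos x
    refine ⟨(a * p x / s) • m + (b * q x / s) • n, hM hm hn ?_ ?_ ?_, ?_⟩
    · exact div_nonneg (mul_pos ha (hp0 x)).le hs0.le
    · exact div_nonneg (mul_pos hb (hq0 x)).le hs0.le
    · rw [← add_div, ← hs, div_self hs0.ne']
    · rw [hasGradientAt_iff_hasFDerivAt] at *
      refine ((hmg.const_mul a).add (hng.const_mul b)).congr_fderiv ?_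
      rw [← map_smul (InnerProductSpace.toDual ℝ (EuclideanSpace ℝ (Fin d))) a,
        ← map_smul (InnerProductSpace.toDual ℝ (EuclideanSpace ℝ (Fin d))) b, ← map_add]
      congr 1
      change _ = s • _
      have : s • ((a * p x / s) • m + (b * q x / s) • n - x) =
          (a * p x) • (m - x) + (b * q x) • (n - x) := by
        rw [smul_sub, smul_add, smul_smul, smul_smul, mul_div_cancel₀ _ hs0.ne',
          mul_div_cancel₀ _ hs0.ne', hs]
        module
      rw [← map_smul V.symm s, this, map_add, map_smul, map_smul, smul_smul, smul_smul]

lemma score_good {d : ℕ} (V : EuclideanSpace ℝ (Fin d) ≃L[ℝ] EuclideanSpace ℝ (Fin d))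
    {M : Set (EuclideanSpace ℝ (Fin d))} {p : EuclideanSpace ℝ (Fin d) → ℝ}
    (hp : Good V M p) (x : EuclideanSpace ℝ (Fin d)) :
    ∃ m ∈ M, score p x = V.symm (m - x) := by
  obtain ⟨hp0, -, -, hpg⟩ := hp
  obtain ⟨m, hm, hmg⟩ := hpg x
  refine ⟨m, hm, ?_⟩
  apply HasGradientAt.gradient
  rw [hasGradientAt_iff_hasFDerivAt] at *
  refine (hmg.log (hp0 x).ne').congr_fderiv ?_
  rw [← map_smul, smul_smul, inv_mul_cancel₀ (hp0 x).ne', one_smul]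

lemma measurable_score {d : ℕ} (p : EuclideanSpace ℝ (Fin d) → ℝ) : Measurable (score p) := by
  unfold score gradient
  exact (InnerProductSpace.toDual ℝ (EuclideanSpace ℝ (Fin d))).symm.continuous.measurable.comp
    (measurable_fderiv ℝ _)

lemma vnorm_eq {d : ℕ} (V : EuclideanSpace ℝ (Fin d) ≃L[ℝ] EuclideanSpace ℝ (Fin d))
    (hsymm : ∀ x y : EuclideanSpace ℝ (Fin d), ⟪V x, y⟫ = ⟪x, V y⟫)
    (θ : EuclideanSpace ℝ (Fin d)) : vnorm V θ = ‖V.symm θ‖ := by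
  unfold vnorm
  rw [← symm_symm V hsymm, real_inner_self_eq_norm_sq, Real.sqrt_sq (norm_nonneg _)]

/-- If `(μ̂_∞, μ̂_1)` minimizes `‖μ_∞ − μ_1‖_V` over the disjoint, convex, compact sets
`M_∞ × M_1`, then the pair of Gaussians `(N(μ̂_∞,V), N(μ̂_1,V))` minimizes the Fisher
divergence `D_F(R_1‖R_∞)` over the convex hulls `G_∞ × G_1` of the corresponding
Gaussian families, and the minimum value is `½‖μ̂_∞ − μ̂_1‖²_V`. -/
theorem gaussian_hulls_least_favorable {d : ℕ}
    (V : EuclideanSpace ℝ (Fin d) ≃L[ℝ] EuclideanSpace ℝ (Fin d))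
    (hsymm : ∀ x y : EuclideanSpace ℝ (Fin d), ⟪V x, y⟫ = ⟪x, V y⟫)
    (hposdef : ∀ x : EuclideanSpace ℝ (Fin d), x ≠ 0 → 0 < ⟪x, V x⟫)
    (Minf M1 : Set (EuclideanSpace ℝ (Fin d)))
    (hdisj : Disjoint Minf M1) (hconvinf : Convex ℝ Minf) (hconv1 : Convex ℝ M1)
    (hcompinf : IsCompact Minf) (hcomp1 : IsCompact M1)
    (μhatinf μhat1 : EuclideanSpace ℝ (Fin d))
    (hμinf : μhatinf ∈ Minf) (hμ1 : μhat1 ∈ M1)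
    (hmin : ∀ a ∈ Minf, ∀ b ∈ M1, vnorm V (μhatinf - μhat1) ≤ vnorm V (a - b)) :
    (∀ rinf ∈ convexHull ℝ ((fun θ => gaussDensity V θ) '' Minf),
      ∀ r1 ∈ convexHull ℝ ((fun θ => gaussDensity V θ) '' M1),
        fisherDiv (gaussDensity V μhat1) (gaussDensity V μhatinf) ≤ fisherDiv r1 rinf) ∧
    fisherDiv (gaussDensity V μhat1) (gaussDensity V μhatinf) =
      (1 / 2) * (vnorm V (μhatinf - μhat1)) ^ 2 := by
  have key : fisherDiv (gaussDensity V μhat1) (gaussDensity V μhatinf) =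
      (1 / 2) * (vnorm V (μhatinf - μhat1)) ^ 2 := by
    have g1 : Good V {μhat1} (gaussDensity V μhat1) := good_gauss V hsymm hposdef rfl
    have g2 : Good V {μhatinf} (gaussDensity V μhatinf) := good_gauss V hsymm hposdef rfl
    have hsc : ∀ x, ‖score (gaussDensity V μhat1) x - score (gaussDensity V μhatinf) x‖ =
        vnorm V (μhatinf - μhat1) := by
      intro x
      obtain ⟨m, rfl, hm⟩ := score_good V g1 x
      obtain ⟨n, rfl, hn⟩ := score_good V g2 x
      rw [hm, hn, vnorm_eq V hsymm, norm_sub_rev, ← map_sub, sub_sub_sub_cancel_right]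
    unfold fisherDiv
    simp_rw [hsc]
    rw [integral_const_mul, g1.2.2.1, mul_one]
  refine ⟨?_, key⟩
  intro rinf hrinf r1 hr1
  rw [key]
  have g1 : Good V M1 r1 := by
    refine convexHull_min ?_ (good_convex V hconv1) hr1
    rintro _ ⟨θ, hθ, rfl⟩
    exact good_gauss V hsymm hposdef hθ
  have g2 : Good V Minf rinf := by
    refine convexHull_min ?_ (good_convex V hconvinf) hrinf
    rintro _ ⟨θ, hθ, rfl⟩
    exact good_gauss V hsymm hposdef hθ
  obtain ⟨C1, hC1⟩ := (hcomp1.image V.symm.continuous).isBounded.exists_norm_le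
  obtain ⟨C2, hC2⟩ := (hcompinf.image V.symm.continuous).isBounded.exists_norm_le
  have hsc : ∀ x, vnorm V (μhatinf - μhat1) ≤ ‖score r1 x - score rinf x‖ ∧
      ‖score r1 x - score rinf x‖ ≤ C1 + C2 := by
    intro x
    obtain ⟨m, hmM, hm⟩ := score_good V g1 x
    obtain ⟨n, hnM, hn⟩ := score_good V g2 x
    have h : score r1 x - score rinf x = V.symm m - V.symm n := by
      rw [hm, hn, ← map_sub, ← map_sub, sub_sub_sub_cancel_right]
    constructor
    · rw [h, norm_sub_rev, ← map_sub, ← vnorm_eq V hsymm]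
      exact hmin n hnM m hmM
    · rw [h]
      exact (norm_sub_le _ _).trans (add_le_add (hC1 _ ⟨m, hmM, rfl⟩) (hC2 _ ⟨n, hnM, rfl⟩))
  have hv : 0 ≤ vnorm V (μhatinf - μhat1) := Real.sqrt_nonneg _
  have hint : Integrable (fun x => (1 / 2) * ‖score r1 x - score rinf x‖ ^ 2 * r1 x) := by
    refine g1.2.1.bdd_mul (c := (1 / 2) * (C1 + C2) ^ 2) ?_ ?_
    · exact ((((measurable_score r1).sub (measurable_score rinf)).norm.pow_const 2).const_mul
        (1 / 2)).aestronglyMeasurable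
    · refine Filter.Eventually.of_forall fun x => ?_
      rw [Real.norm_of_nonneg (by positivity)]
      have := (hsc x).2
      gcongr
  calc (1 / 2) * (vnorm V (μhatinf - μhat1)) ^ 2
      = ∫ x, (1 / 2) * (vnorm V (μhatinf - μhat1)) ^ 2 * r1 x := by
        rw [integral_const_mul, g1.2.2.1, mul_one]
    _ ≤ fisherDiv r1 rinf := by
        refine integral_mono (g1.2.1.const_mul _) hint fun x => ?_
        have h1 := (hsc x).1
        have h2 := (g1.1 x).le
        dsimp only
        gcongr
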